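/- arXiv:1708.06012 — 5 statements merged into one kernel-verified Lean document; each statement's English description precedes it below -/
import Mathlib

section
/- Let F be a field, μ ≥ 1, let e_1, …, e_{μ+1} be pairwise distinct nonzero elements of F, c ≥ 0 an integer, and let Ψ be the (μ+1) × μ generalized Vandermonde matrix with entries Ψ_{i,j} = e_i^{c+j−1}. If D is a symmetric μ × μ matrix over F such that Ψ D Ψ^T is a diagonal matrix, then D = 0. -/
/-!
The entries of `Ψ *ᵥ v` are the values at the nodes `e i` of `X ^ c * f`, where `f` is the
polynomial of degree `< ℓ` with coefficients `v`. Since the nodes are nonzero and distinct, `v = 0`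
as soon as `ℓ` of these entries vanish. If `Ψ * D * Ψᵀ` is diagonal, then `Ψ *ᵥ v` has at most one
nonzero entry for each row `v` of `Ψ * D`, so `Ψ * D = 0`; hence `Ψ` kills the columns of `D`.
-/

open Matrix

/-- The generalized Vandermonde matrix with offset `c`: entries `A i j = e i ^ (c + j)`
(0-indexed; this corresponds to `A_{i,j} = e_i^{c+j-1}` with 1-based indexing). -/
def genVandermonde {F : Type*} [Field F] (m ℓ : ℕ) (e : Fin m → F) (c : ℕ) :
    Matrix (Fin m) (Fin ℓ) F :=
  Matrix.of fun i j => e i ^ (c + j.val)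

theorem eq_zero_of_isDiag_mul {m n R : Type*} [Fintype n] [NonUnitalNonAssocSemiring R]
    {C : Matrix m n R} {B : Matrix n m R}
    (hB : ∀ i v, (∀ j ≠ i, (v ᵥ* B) j = 0) → v = 0) (hCB : (C * B).IsDiag) : C = 0 := by
  funext i
  refine hB i (C i) fun j hj ↦ ?_
  rw [← mul_apply_eq_vecMul]
  exact hCB hj.symm

section GenVandermonde

variable {F : Type*} [Field F] {m ℓ : ℕ} {e : Fin m → F} {c : ℕ}

theorem genVandermonde_mulVec_apply (v : Fin ℓ → F) (i : Fin m) :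
    (genVandermonde m ℓ e c *ᵥ v) i = e i ^ c * ∑ j : Fin ℓ, e i ^ j.val * v j := by
  simp [genVandermonde, mulVec, dotProduct, pow_add, mul_assoc, Finset.mul_sum]

theorem eq_zero_of_genVandermonde_mulVec_eq_zero_on {s : Finset (Fin m)} (hs : ℓ ≤ s.card)
    (he : ∀ i ∈ s, e i ≠ 0) (hinj : Set.InjOn e s) {v : Fin ℓ → F}
    (hv : ∀ i ∈ s, (genVandermonde m ℓ e c *ᵥ v) i = 0) : v = 0 := by
  let row := s.orderEmbOfCardLe hs
  have row_mem (k : Fin ℓ) : row k ∈ s := s.orderEmbOfCardLe_mem hs k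
  have nodes_injective : Function.Injective (e ∘ row) := fun _ _ h ↦
    row.injective (hinj (row_mem _) (row_mem _) h)
  refine eq_zero_of_forall_index_sum_pow_mul_eq_zero nodes_injective fun k ↦ ?_
  have hk := hv (row k) (row_mem k)
  rw [genVandermonde_mulVec_apply] at hk
  exact (mul_eq_zero.mp hk).resolve_left (pow_ne_zero c (he _ (row_mem k)))

theorem genVandermonde_mulVec_injective (hℓ : ℓ ≤ m) (he : ∀ i, e i ≠ 0)
    (hinj : Function.Injective e) : Function.Injective (genVandermonde m ℓ e c).mulVec := by
  refine (injective_iff_map_eq_zero (genVandermonde m ℓ e c).mulVecLin).mpr fun v hv ↦ ?_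
  exact eq_zero_of_genVandermonde_mulVec_eq_zero_on (s := Finset.univ) (by simpa using hℓ)
    (fun i _ ↦ he i) hinj.injOn fun i _ ↦ congrFun hv i

theorem eq_zero_of_genVandermonde_mulVec_eq_zero_off (hℓ : ℓ < m) (he : ∀ i, e i ≠ 0)
    (hinj : Function.Injective e) (i : Fin m) {v : Fin ℓ → F}
    (hv : ∀ j ≠ i, (genVandermonde m ℓ e c *ᵥ v) j = 0) : v = 0 :=
  eq_zero_of_genVandermonde_mulVec_eq_zero_on (s := {i}ᶜ)
    (by rw [Finset.card_compl, Finset.card_singleton, Fintype.card_fin]; lia)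
    (fun j _ ↦ he j) hinj.injOn (by simpa using hv)

end GenVandermonde

theorem symm_conj_genVandermonde_isDiag_eq_zero_general {F : Type*} [Field F] {m ℓ : ℕ}
    (hℓ : ℓ < m) (c : ℕ) (e : Fin m → F) (he : ∀ i, e i ≠ 0) (hinj : Function.Injective e)
    (D : Matrix (Fin ℓ) (Fin ℓ) F)
    (hdiag : (genVandermonde m ℓ e c * D * (genVandermonde m ℓ e c)ᵀ).IsDiag) :
    D = 0 := by
  have mul_D_eq_zero : genVandermonde m ℓ e c * D = 0 := by
    refine eq_zero_of_isDiag_mul (fun i v hv ↦ ?_) hdiag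
    simp only [vecMul_transpose] at hv
    exact eq_zero_of_genVandermonde_mulVec_eq_zero_off hℓ he hinj i hv
  refine ext_col fun k ↦ genVandermonde_mulVec_injective (c := c) hℓ.le he hinj ?_
  calc genVandermonde m ℓ e c *ᵥ D.col k
      = (genVandermonde m ℓ e c * D).col k := rfl
    _ = genVandermonde m ℓ e c *ᵥ 0 := by rw [mul_D_eq_zero, mulVec_zero]; rfl

/-- if `Ψ` is the `(μ+1) × μ` generalized Vandermonde matrix built from
pairwise distinct nonzero elements, `D` is a symmetric `μ × μ` matrix, and `Ψ * D * Ψᵀ`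
is a diagonal matrix, then `D = 0`. -/
theorem symm_conj_genVandermonde_isDiag_eq_zero {F : Type*} [Field F] (μ : ℕ) (hμ : 1 ≤ μ)
    (c : ℕ) (e : Fin (μ + 1) → F) (he : ∀ i, e i ≠ 0) (hinj : Function.Injective e)
    (D : Matrix (Fin μ) (Fin μ) F) (hD : D.IsSymm)
    (hdiag : (genVandermonde (μ + 1) μ e c * D * (genVandermonde (μ + 1) μ e c)ᵀ).IsDiag) :
    D = 0 :=
  symm_conj_genVandermonde_isDiag_eq_zero_general μ.lt_succ_self c e he hinj D hdiag
end

section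
/- Let F be a field, μ ≥ 1, z ≥ 1, n ≥ 1, with pairwise distinct nonzero elements e_1, …, e_n of F, and let M be the data matrix built from symmetric μ × μ matrices S_1, …, S_{2z}. Let m ≥ 1 divide z, set d = (m+1)μ, let f be a node index and H = {ℓ_1, …, ℓ_d} a set of d node indices. Then the d × 1 column vector Υ_H(1) whose entry for helper ℓ is the repair symbol r_1(ℓ, f) satisfies Υ_H(1) = Ω_H(1) · N · (ψ_f(1))^T, where N is the d × mμ matrix whose top mμ rows form the submatrix M_1 of M and whose bottom μ rows are the block row [O, …, O, S_{2m}] consisting of (m−1) μ × μ zero blocks followed by S_{2m}. -/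
open Matrix Finset

section ProductMatrixBAMSR

variable {F : Type*} [Field F]

/-- The data matrix `M` of the bandwidth adaptive product-matrix MSR code:
a `((z+1)μ) × (zμ)` matrix built from a (1-indexed) family `S 1, …, S (2z)` of `μ × μ`
matrices, with `μ × μ` blocks `B(t,t) = S (2t-1)` for `1 ≤ t ≤ z`,
`B(t,t+1) = S (2t)` for `1 ≤ t ≤ z-1`, `B(t+1,t) = S (2t)` for `1 ≤ t ≤ z`, and all
other blocks zero. -/
def dataMatrix (z μ : ℕ) (hμ : 0 < μ) (S : ℕ → Matrix (Fin μ) (Fin μ) F) :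
    Matrix (Fin ((z + 1) * μ)) (Fin (z * μ)) F :=
  Matrix.of fun r c =>
    if r.val / μ = c.val / μ then
      S (2 * (c.val / μ) + 1) ⟨r.val % μ, Nat.mod_lt _ hμ⟩ ⟨c.val % μ, Nat.mod_lt _ hμ⟩
    else if r.val / μ + 1 = c.val / μ then
      S (2 * (r.val / μ) + 2) ⟨r.val % μ, Nat.mod_lt _ hμ⟩ ⟨c.val % μ, Nat.mod_lt _ hμ⟩
    else if r.val / μ = c.val / μ + 1 then
      S (2 * (c.val / μ) + 2) ⟨r.val % μ, Nat.mod_lt _ hμ⟩ ⟨c.val % μ, Nat.mod_lt _ hμ⟩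
    else 0

/-- Coefficient (row) vector of a node with evaluation point `e`:
`ψ = (e, e², …, e^{(z+1)μ})`. -/
def psiVec (z μ : ℕ) (e : F) : Fin ((z + 1) * μ) → F := fun r => e ^ (r.val + 1)

/-- Stored content of a node with evaluation point `e`: the row vector `x = ψ M`
of length `α = zμ`. -/
def stored (z μ : ℕ) (hμ : 0 < μ) (S : ℕ → Matrix (Fin μ) (Fin μ) F) (e : F) :
    Fin (z * μ) → F :=
  Matrix.vecMul (psiVec z μ e) (dataMatrix z μ hμ S)

/-- The row vector `φ = (e, e², …, e^μ)`. -/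
def phiVec (μ : ℕ) (e : F) : Fin μ → F := fun a => e ^ (a.val + 1)

/-- The `i`-th (1-indexed) length-`mμ` segment of the coefficient vector `ψ`:
`ψ(i) = (e^{(i-1)mμ+1}, …, e^{imμ})`. -/
def psiSeg (m μ i : ℕ) (e : F) : Fin (m * μ) → F :=
  fun a => e ^ ((i - 1) * (m * μ) + a.val + 1)

lemma seg_bound {z μ m i : ℕ} (hμ : 0 < μ) (hm : 0 < m) (hi1 : 1 ≤ i)
    (hiz : i ≤ z / m) (hdvd : m ∣ z) {a : ℕ} (ha : a < m * μ) :
    (i - 1) * (m * μ) + a < z * μ := by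
  obtain ⟨t, rfl⟩ := hdvd
  rw [Nat.mul_div_cancel_left t hm] at hiz
  obtain ⟨i', rfl⟩ := Nat.exists_eq_add_of_le hi1
  have h2 : (1 + i' - 1) * (m * μ) + m * μ = (1 + i') * (m * μ) := by
    have : 1 + i' - 1 = i' := by omega
    rw [this]; ring
  have h3 : (1 + i') * (m * μ) ≤ m * t * μ := by
    have hit : (1 + i') * m ≤ m * t := by nlinarith
    calc (1 + i') * (m * μ) = (1 + i') * m * μ := by ring
      _ ≤ m * t * μ := Nat.mul_le_mul_right _ hit
  omega

/-- The `i`-th (1-indexed) length-`mμ` segment of the stored content `x = ψ M`. -/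
def xSeg (z μ m i : ℕ) (hμ : 0 < μ) (hm : 0 < m) (hi1 : 1 ≤ i) (hiz : i ≤ z / m)
    (hdvd : m ∣ z) (S : ℕ → Matrix (Fin μ) (Fin μ) F) (e : F) : Fin (m * μ) → F :=
  fun a => stored z μ hμ S e ⟨(i - 1) * (m * μ) + a.val, seg_bound hμ hm hi1 hiz hdvd a.isLt⟩

/-- The repair symbol `r_i(h, f) = x_h(i) · (ψ_f(i))ᵀ` sent by a helper with evaluation
point `eh` for a failed node with evaluation point `ef`. -/
def repairSym (z μ m i : ℕ) (hμ : 0 < μ) (hm : 0 < m) (hi1 : 1 ≤ i) (hiz : i ≤ z / m)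
    (hdvd : m ∣ z) (S : ℕ → Matrix (Fin μ) (Fin μ) F) (eh ef : F) : F :=
  ∑ a, xSeg z μ m i hμ hm hi1 hiz hdvd S eh a * psiSeg m μ i ef a

/-- The `i`-th (1-indexed) diagonal `mμ × mμ` submatrix `M_i` of the data matrix,
consisting of rows and columns `(i-1)mμ+1, …, imμ`. -/
def subM (z μ m i : ℕ) (hμ : 0 < μ) (hm : 0 < m) (hi1 : 1 ≤ i) (hiz : i ≤ z / m)
    (hdvd : m ∣ z) (S : ℕ → Matrix (Fin μ) (Fin μ) F) :
    Matrix (Fin (m * μ)) (Fin (m * μ)) F :=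
  Matrix.of fun a b =>
    dataMatrix z μ hμ S
      ⟨(i - 1) * (m * μ) + a.val,
        lt_of_lt_of_le (seg_bound hμ hm hi1 hiz hdvd a.isLt)
          (Nat.mul_le_mul_right _ (Nat.le_succ z))⟩
      ⟨(i - 1) * (m * μ) + b.val, seg_bound hμ hm hi1 hiz hdvd b.isLt⟩

/-- The `d × d` matrix `Ω_H(i)` (with `d = (m+1)μ`) whose row for helper `ℓ r` is
`(e_{ℓ r}^{(i-1)mμ+1}, …, e_{ℓ r}^{(i-1)mμ+d})`, i.e. `[ψ_{ℓ r}(i), e_{ℓ r}^{imμ} φ_{ℓ r}]`. -/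
def OmegaMat (n μ m i : ℕ) (e : Fin n → F) (ℓ : Fin ((m + 1) * μ) → Fin n) :
    Matrix (Fin ((m + 1) * μ)) (Fin ((m + 1) * μ)) F :=
  Matrix.of fun r c => e (ℓ r) ^ ((i - 1) * (m * μ) + c.val + 1)

lemma nmat_aux1 {m μ r : ℕ} (h : r < (m + 1) * μ) (h2 : ¬ r < m * μ) : r - m * μ < μ := by
  have hh : (m + 1) * μ = m * μ + μ := by ring
  omega

lemma nmat_aux2 {m μ c : ℕ} (hm : 0 < m) (h : c < m * μ) (h2 : (m - 1) * μ ≤ c) :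
    c - (m - 1) * μ < μ := by
  have h3 : (m - 1) * μ + μ = m * μ := by
    cases m with
    | zero => omega
    | succ k => rw [Nat.succ_sub_one, Nat.succ_mul]
  omega

/-- The `d × mμ` matrix `N_i` whose top `mμ` rows form the matrix `Mi` and whose bottom
`μ` rows form the block row `[O, …, O, S₂]` of `m-1` zero `μ × μ` blocks followed by `S₂`. -/
def Nmat (μ m : ℕ) (hm : 0 < m) (Mi : Matrix (Fin (m * μ)) (Fin (m * μ)) F)
    (S2 : Matrix (Fin μ) (Fin μ) F) : Matrix (Fin ((m + 1) * μ)) (Fin (m * μ)) F :=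
  Matrix.of fun r c =>
    if h : r.val < m * μ then Mi ⟨r.val, h⟩ c
    else if h2 : (m - 1) * μ ≤ c.val then
      S2 ⟨r.val - m * μ, nmat_aux1 r.isLt h⟩ ⟨c.val - (m - 1) * μ, nmat_aux2 hm c.isLt h2⟩
    else 0

/-- The top `(d-μ) × d = mμ × d` submatrix `Θ` of a `d × d` matrix (`d = (m+1)μ`). -/
def ThetaMat (μ m : ℕ) (A : Matrix (Fin ((m + 1) * μ)) (Fin ((m + 1) * μ)) F) :
    Matrix (Fin (m * μ)) (Fin ((m + 1) * μ)) F :=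
  Matrix.of fun r c =>
    A ⟨r.val, lt_of_lt_of_le r.isLt (Nat.mul_le_mul_right _ (Nat.le_succ m))⟩ c

/-- The bottom `μ × d` submatrix `Ξ` of a `d × d` matrix (`d = (m+1)μ`). -/
def XiMat (μ m : ℕ) (A : Matrix (Fin ((m + 1) * μ)) (Fin ((m + 1) * μ)) F) :
    Matrix (Fin μ) (Fin ((m + 1) * μ)) F :=
  Matrix.of fun r c =>
    A ⟨m * μ + r.val, by
      have hh : (m + 1) * μ = m * μ + μ := by ring
      have hr := r.isLt
      omega⟩ c

end ProductMatrixBAMSR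

/-!
The data matrix is block tridiagonal, so its first `m` block columns vanish below block row `m + 1`.
Hence the first segment of `ψ_h M` only involves the upper left `(m+1)μ × mμ` corner of `M`, paired
with the first `(m+1)μ` entries of `ψ_h`, which form the row of `Ω_H(1)` for helper `h`. In the last
block row of that corner only the subdiagonal block `S_{2m}` survives, so the corner is `N`.
-/

lemma vecMul_comp_eq_vecMul_submatrix {R ι ι' κ κ' : Type*} [NonUnitalNonAssocSemiring R]
    [Fintype ι] [Fintype ι'] (v : ι → R) (A : Matrix ι κ R) {p : ι' → ι} (q : κ' → κ)
    (hp : Function.Injective p) (hA : ∀ r ∉ Set.range p, ∀ c, A r (q c) = 0) :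
    (v ᵥ* A) ∘ q = (v ∘ p) ᵥ* A.submatrix p q := by
  funext c
  refine (Fintype.sum_of_injective p hp _ _ (fun r hr => ?_) fun _ => rfl).symm
  change v r * A r (q c) = 0
  rw [hA r hr c, mul_zero]

section RepairVector

variable {F : Type*} [Field F] {μ z m i : ℕ}
  (hμ : 0 < μ) (hm : 0 < m) (hdvd : m ∣ z) (S : ℕ → Matrix (Fin μ) (Fin μ) F)

lemma dataMatrix_apply_of_below_band {t : ℕ} {r : Fin ((z + 1) * μ)} {c : Fin (z * μ)}
    (hr : (t + 1) * μ ≤ r.val) (hc : c.val < t * μ) : dataMatrix z μ hμ S r c = 0 := by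
  have hr' : t + 1 ≤ r.val / μ := (Nat.le_div_iff_mul_le hμ).2 hr
  have hc' : c.val / μ < t := (Nat.div_lt_iff_lt_mul hμ).2 hc
  rw [dataMatrix, of_apply, if_neg (by omega), if_neg (by omega), if_neg (by omega)]

lemma dataMatrix_apply_subdiagonal_block {t : ℕ} {r : Fin ((z + 1) * μ)} {c : Fin (z * μ)}
    {a b : Fin μ} (hr : r.val = (t + 1) * μ + a) (hc : c.val = t * μ + b) :
    dataMatrix z μ hμ S r c = S (2 * t + 2) a b := by
  have div_block (s : ℕ) (x : Fin μ) : (s * μ + x) / μ = s := by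
    rw [Nat.add_comm, Nat.add_mul_div_right _ _ hμ, Nat.div_eq_of_lt x.isLt, Nat.zero_add]
  have mod_block (s : ℕ) (x : Fin μ) : (s * μ + x) % μ = x :=
    Nat.mul_add_mod_of_lt x.isLt
  simp only [dataMatrix, of_apply, hr, hc, div_block, mod_block]
  rw [if_neg (by omega), if_neg (by omega), if_pos trivial]

lemma Nmat_subM_apply_eq_dataMatrix (hi : 1 ≤ i) (hiz : i ≤ z / m)
    {r : Fin ((m + 1) * μ)} {c : Fin (m * μ)} {r' : Fin ((z + 1) * μ)} {c' : Fin (z * μ)}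
    (hr : r'.val = (i - 1) * (m * μ) + r) (hc : c'.val = (i - 1) * (m * μ) + c) :
    Nmat μ m hm (subM z μ m i hμ hm hi hiz hdvd S) (S (2 * (i * m))) r c
      = dataMatrix z μ hμ S r' c' := by
  obtain ⟨k, rfl⟩ := Nat.exists_eq_add_one.2 hi
  obtain ⟨j, rfl⟩ := Nat.exists_eq_add_one.2 hm
  simp only [Nat.add_sub_cancel] at hr hc
  have block_start : k * ((j + 1) * μ) + j * μ = (k * (j + 1) + j) * μ := by ring
  have next_block_start : k * ((j + 1) * μ) + (j + 1) * μ = (k * (j + 1) + j + 1) * μ := by ring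
  simp only [Nmat, of_apply, Nat.add_sub_cancel]
  split_ifs with hrow hcol
  · rw [subM, of_apply]
    congr 1 <;> ext <;> simp [hr, hc]
  · rw [dataMatrix_apply_subdiagonal_block hμ S (t := k * (j + 1) + j)
      (a := ⟨r - (j + 1) * μ, nmat_aux1 r.isLt hrow⟩)
      (b := ⟨c - j * μ, nmat_aux2 hm c.isLt hcol⟩) (by dsimp only; omega) (by dsimp only; omega)]
    congr 2
    ring
  · exact (dataMatrix_apply_of_below_band hμ S (t := k * (j + 1) + j) (by omega) (by omega)).symm

lemma stored_comp_castLE (hmz : m ≤ z) (x : F) :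
    stored z μ hμ S x ∘ Fin.castLE (Nat.mul_le_mul_right μ hmz)
      = psiVec m μ x ᵥ* (dataMatrix z μ hμ S).submatrix
          (Fin.castLE (Nat.mul_le_mul_right μ (Nat.succ_le_succ hmz)))
          (Fin.castLE (Nat.mul_le_mul_right μ hmz)) := by
  refine vecMul_comp_eq_vecMul_submatrix _ _ _ (Fin.castLE_injective _) fun r hr c => ?_
  have hr' : (m + 1) * μ ≤ r.val := by simpa [Fin.range_castLE] using hr
  exact dataMatrix_apply_of_below_band hμ S hr' c.isLt

lemma xSeg_one_eq_psiVec_vecMul_Nmat (h1z : 1 ≤ z / m) (x : F) :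
    xSeg z μ m 1 hμ hm le_rfl h1z hdvd S x
      = psiVec m μ x ᵥ* Nmat μ m hm (subM z μ m 1 hμ hm le_rfl h1z hdvd S) (S (2 * m)) := by
  have hmz : m ≤ z := (Nat.div_pos_iff.1 h1z).2
  have segment : xSeg z μ m 1 hμ hm le_rfl h1z hdvd S x
      = stored z μ hμ S x ∘ Fin.castLE (Nat.mul_le_mul_right μ hmz) := by
    funext c
    simp only [xSeg, Function.comp_apply]
    congr 1
    ext
    simp
  rw [segment, stored_comp_castLE hμ S hmz]
  congr 1
  ext r c
  rw [submatrix_apply, ← Nmat_subM_apply_eq_dataMatrix hμ hm hdvd S le_rfl h1z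
    (r := r) (c := c) (by simp) (by simp), one_mul]

lemma OmegaMat_one_row_eq_psiVec {n : ℕ} (e : Fin n → F) (ℓ : Fin ((m + 1) * μ) → Fin n)
    (r : Fin ((m + 1) * μ)) : OmegaMat n μ m 1 e ℓ r = psiVec m μ (e (ℓ r)) := by
  funext c
  simp [OmegaMat, psiVec]

theorem repair_vector_eq_step1_general {n : ℕ} (e : Fin n → F)
    (ℓ : Fin ((m + 1) * μ) → Fin n) (h1z : 1 ≤ z / m) (y : F) :
    (fun r => repairSym z μ m 1 hμ hm le_rfl h1z hdvd S (e (ℓ r)) y)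
      = (OmegaMat n μ m 1 e ℓ *
          Nmat μ m hm (subM z μ m 1 hμ hm le_rfl h1z hdvd S) (S (2 * m))) *ᵥ psiSeg m μ 1 y := by
  funext r
  change xSeg z μ m 1 hμ hm le_rfl h1z hdvd S (e (ℓ r)) ⬝ᵥ psiSeg m μ 1 y = _ ⬝ᵥ psiSeg m μ 1 y
  rw [mul_apply_eq_vecMul, OmegaMat_one_row_eq_psiVec, xSeg_one_eq_psiVec_vecMul_Nmat]

end RepairVector

/-- with `d = (m+1)μ`, failed node `f` and helper set
`H = {ℓ 0, …, ℓ (d-1)}`, the `d × 1` column vector `Υ_H(1)` of first repair symbols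
`r₁(ℓ, f)` satisfies `Υ_H(1) = Ω_H(1) ⬝ N ⬝ (ψ_f(1))ᵀ`, where `N` is the `d × mμ` matrix
whose top `mμ` rows form `M₁` and whose bottom `μ` rows form `[O, …, O, S_{2m}]`. -/
theorem repair_vector_eq_step1 {F : Type*} [Field F] (μ z m n : ℕ) (hμ : 0 < μ)
    (hz : 0 < z) (hm : 0 < m) (hdvd : m ∣ z) (hn : 0 < n)
    (e : Fin n → F) (he : ∀ j, e j ≠ 0) (heinj : Function.Injective e)
    (S : ℕ → Matrix (Fin μ) (Fin μ) F) (hS : ∀ t, 1 ≤ t → t ≤ 2 * z → (S t).IsSymm)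
    (f : Fin n) (ℓ : Fin ((m + 1) * μ) → Fin n) (hℓ : Function.Injective ℓ)
    (h1z : 1 ≤ z / m) :
    (fun r : Fin ((m + 1) * μ) =>
        repairSym z μ m 1 hμ hm (le_refl 1) h1z hdvd S (e (ℓ r)) (e f))
      = Matrix.mulVec
          (OmegaMat n μ m 1 e ℓ *
            Nmat μ m hm (subM z μ m 1 hμ hm (le_refl 1) h1z hdvd S) (S (2 * m)))
          (psiSeg m μ 1 (e f)) :=
  repair_vector_eq_step1_general hμ hm hdvd S e ℓ h1z (e f)
end

section
/- In the setting of the repair procedure with m ∣ z, d = (m+1)μ, failed node f and helper set H = {ℓ_1, …, ℓ_d} of pairwise distinct node indices with pairwise distinct nonzero e_{ℓ_1}, …, e_{ℓ_d}: partition (Ω_H(1))^{−1} = [Θ; Ξ] where Θ is the top (d−μ) × d submatrix and Ξ the bottom μ × d submatrix, and let Υ_H(1) be the d × 1 column vector of repair symbols r_1(ℓ, f), ℓ ∈ H. Then M_1 (ψ_f(1))^T = Θ Υ_H(1), S_{2m} (e_f^{(m−1)μ} φ_f)^T = Ξ Υ_H(1), and consequently the first mμ entries of the failed node's content satisfy x_f(1)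 = ψ_f(1) M_1 + [0, …, 0, e_f^{mμ} φ_f S_{2m}], where the zero padding has length (m−1)μ. -/
open Matrix Finset

/-! Entries of `M` below the block subdiagonal vanish, so the first segment `x(1)` of any node is
`(e, …, e^d) N₁`, where `N₁`, the leading `d × mμ` part of `M`, is `M₁` stacked on
`[0, …, 0, S_{2m}]`. Pairing with `ψ_f(1)` over all helpers gives `Υ = Ω N₁ ψ_f(1)ᵀ`. As `Ω` is a
Vandermonde matrix up to row scaling, `Ω⁻¹ Υ = N₁ ψ_f(1)ᵀ`, and its top and bottom parts are
the two decoded vectors. -/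

section BlockSplitting

variable {M : Type*} {k μ : ℕ}

/-- The splitting of `k + 1` consecutive blocks of length `μ` into the first `k` blocks and the
last one. It indexes the stackings `[Θ; Ξ]` and `[M₁; 0, …, 0, S_{2m}]` and the final block of a
coefficient vector. -/
def lastBlockEquiv (k μ : ℕ) : Fin (k * μ) ⊕ Fin μ ≃ Fin ((k + 1) * μ) :=
  finSumFinEquiv.trans (finCongr (Nat.succ_mul k μ).symm)

lemma val_lastBlockEquiv_inl (a : Fin (k * μ)) : (lastBlockEquiv k μ (.inl a)).val = a.val :=
  rfl

lemma val_lastBlockEquiv_inr (b : Fin μ) : (lastBlockEquiv k μ (.inr b)).val = k * μ + b.val :=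
  rfl

lemma sum_univ_lastBlockEquiv [AddCommMonoid M] (g : Fin ((k + 1) * μ) → M) :
    ∑ r, g r = ∑ a, g (lastBlockEquiv k μ (.inl a)) + ∑ b, g (lastBlockEquiv k μ (.inr b)) := by
  rw [← (lastBlockEquiv k μ).sum_comp, Fintype.sum_sum_type]

end BlockSplitting

section BlockMatrices

variable {F : Type*} [Field F] {k m μ : ℕ}

lemma phiVec_lastBlockEquiv_inr (x : F) (b : Fin μ) :
    phiVec ((k + 1) * μ) x (lastBlockEquiv k μ (.inr b)) = x ^ (k * μ) * phiVec μ x b := by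
  simp only [phiVec, val_lastBlockEquiv_inr, add_assoc, pow_add]

lemma ThetaMat_mulVec (A : Matrix (Fin ((m + 1) * μ)) (Fin ((m + 1) * μ)) F)
    (v : Fin ((m + 1) * μ) → F) (a : Fin (m * μ)) :
    (ThetaMat μ m A *ᵥ v) a = (A *ᵥ v) (lastBlockEquiv m μ (.inl a)) :=
  rfl

lemma XiMat_mulVec (A : Matrix (Fin ((m + 1) * μ)) (Fin ((m + 1) * μ)) F)
    (v : Fin ((m + 1) * μ) → F) (b : Fin μ) :
    (XiMat μ m A *ᵥ v) b = (A *ᵥ v) (lastBlockEquiv m μ (.inr b)) :=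
  rfl

lemma Nmat_inl (hm : 0 < m) (A : Matrix (Fin (m * μ)) (Fin (m * μ)) F)
    (B : Matrix (Fin μ) (Fin μ) F) (a c : Fin (m * μ)) :
    Nmat μ m hm A B (lastBlockEquiv m μ (.inl a)) c = A a c := by
  rw [Nmat, of_apply, dif_pos (val_lastBlockEquiv_inl a ▸ a.isLt)]
  rfl

lemma Nmat_inr (hm : 0 < m) (A : Matrix (Fin (m * μ)) (Fin (m * μ)) F)
    (B : Matrix (Fin μ) (Fin μ) F) (b : Fin μ) (c : Fin (m * μ)) :
    Nmat μ m hm A B (lastBlockEquiv m μ (.inr b)) c =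
      if h : (m - 1) * μ ≤ c.val then B b ⟨c.val - (m - 1) * μ, nmat_aux2 hm c.isLt h⟩ else 0 := by
  simp [Nmat, val_lastBlockEquiv_inr]

lemma Nmat_mulVec_inl (hm : 0 < m) (A : Matrix (Fin (m * μ)) (Fin (m * μ)) F)
    (B : Matrix (Fin μ) (Fin μ) F) (w : Fin (m * μ) → F) (a : Fin (m * μ)) :
    (Nmat μ m hm A B *ᵥ w) (lastBlockEquiv m μ (.inl a)) = (A *ᵥ w) a := by
  simp only [mulVec, dotProduct, Nmat_inl]

lemma Nmat_mulVec_inr (A : Matrix (Fin ((k + 1) * μ)) (Fin ((k + 1) * μ)) F)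
    (B : Matrix (Fin μ) (Fin μ) F) (w : Fin ((k + 1) * μ) → F) (b : Fin μ) :
    (Nmat μ (k + 1) k.succ_pos A B *ᵥ w) (lastBlockEquiv (k + 1) μ (.inr b)) =
      (B *ᵥ fun c => w (lastBlockEquiv k μ (.inr c))) b := by
  have before_last (c : Fin (k * μ)) : ¬ k * μ ≤ c.val := not_le.2 c.isLt
  simp [mulVec, dotProduct, Nmat_inr, sum_univ_lastBlockEquiv, val_lastBlockEquiv_inl,
    val_lastBlockEquiv_inr, before_last]

lemma vecMul_Nmat (hm : 0 < m) (A : Matrix (Fin (m * μ)) (Fin (m * μ)) F)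
    (B : Matrix (Fin μ) (Fin μ) F) (v : Fin ((m + 1) * μ) → F) (c : Fin (m * μ)) :
    (v ᵥ* Nmat μ m hm A B) c =
      ((fun a => v (lastBlockEquiv m μ (.inl a))) ᵥ* A) c +
        if h : (m - 1) * μ ≤ c.val then
          ((fun b => v (lastBlockEquiv m μ (.inr b))) ᵥ* B)
            ⟨c.val - (m - 1) * μ, nmat_aux2 hm c.isLt h⟩
        else 0 := by
  simp only [vecMul, dotProduct, sum_univ_lastBlockEquiv, Nmat_inl, Nmat_inr]
  split_ifs <;> simp

end BlockMatrices

section DataMatrix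

variable {F : Type*} [Field F] {z m μ : ℕ} (hμ : 0 < μ) (S : ℕ → Matrix (Fin μ) (Fin μ) F)

lemma dataMatrix_eq_zero {q : ℕ} {r : Fin ((z + 1) * μ)} {c : Fin (z * μ)}
    (hr : (q + 1) * μ ≤ r.val) (hc : c.val < q * μ) : dataMatrix z μ hμ S r c = 0 := by
  have hcq : c.val / μ < q := (Nat.div_lt_iff_lt_mul hμ).2 hc
  have hqr : q + 1 ≤ r.val / μ := (Nat.le_div_iff_mul_le hμ).2 hr
  rw [dataMatrix, of_apply, if_neg (by omega), if_neg (by omega), if_neg (by omega)]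

lemma dataMatrix_subdiagonal {q : ℕ} {r : Fin ((z + 1) * μ)} {c : Fin (z * μ)} (a b : Fin μ)
    (hr : r.val = (q + 1) * μ + a.val) (hc : c.val = q * μ + b.val) :
    dataMatrix z μ hμ S r c = S (2 * (q + 1)) a b := by
  have block_div (t : ℕ) (j : Fin μ) : (t * μ + j.val) / μ = t := by
    rw [mul_comm, Nat.mul_add_div hμ, Nat.div_eq_of_lt j.isLt, add_zero]
  have block_mod (t : ℕ) (j : Fin μ) : (t * μ + j.val) % μ = j.val := by
    rw [mul_comm, Nat.mul_add_mod, Nat.mod_eq_of_lt j.isLt]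
  simp only [dataMatrix, of_apply, hr, hc, block_div, block_mod]
  rw [if_neg (by omega), if_neg (by omega), if_pos trivial, mul_add_one]

variable (hm : 0 < m) (hdvd : m ∣ z) (h1z : 1 ≤ z / m)

lemma Nmat_subM_one :
    Nmat μ m hm (subM z μ m 1 hμ hm le_rfl h1z hdvd S) (S (2 * m)) =
      (dataMatrix z μ hμ S).submatrix
        (Fin.castLE (Nat.mul_le_mul_right μ (Nat.succ_le_succ ((Nat.one_le_div_iff hm).1 h1z))))
        (Fin.castLE (Nat.mul_le_mul_right μ ((Nat.one_le_div_iff hm).1 h1z))) := by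
  ext r c
  obtain ⟨a | b, rfl⟩ := (lastBlockEquiv m μ).surjective r
  · simp [Nmat_inl, subM, Fin.castLE, val_lastBlockEquiv_inl]
  · obtain ⟨k, rfl⟩ := Nat.exists_eq_add_one.2 hm
    rw [Nmat_inr, submatrix_apply]
    split_ifs with hc
    · exact (dataMatrix_subdiagonal hμ S b ⟨_, nmat_aux2 hm c.isLt hc⟩ rfl
        (Nat.add_sub_cancel' hc).symm).symm
    · exact (dataMatrix_eq_zero hμ S (Nat.le_add_right _ _) (not_le.1 hc)).symm

lemma psiSeg_one (x : F) : psiSeg m μ 1 x = phiVec (m * μ) x := by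
  ext a
  simp only [psiSeg, phiVec, Nat.sub_self, zero_mul, zero_add]

lemma xSeg_one (x : F) :
    xSeg z μ m 1 hμ hm le_rfl h1z hdvd S x =
      phiVec ((m + 1) * μ) x ᵥ*
        Nmat μ m hm (subM z μ m 1 hμ hm le_rfl h1z hdvd S) (S (2 * m)) := by
  ext c
  rw [Nmat_subM_one]
  simp only [xSeg, stored, Nat.sub_self, zero_mul, zero_add]
  symm
  refine Fintype.sum_of_injective _ (Fin.castLE_injective _) _ _ (fun r hr => ?_) fun r => rfl
  have hrm : (m + 1) * μ ≤ r.val := by simpa [Fin.range_castLE] using hr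
  exact mul_eq_zero_of_right _ (dataMatrix_eq_zero hμ S hrm c.isLt)

end DataMatrix

section Repair

variable {F : Type*} [Field F] {z m n μ : ℕ} {e : Fin n → F} {ℓ : Fin ((m + 1) * μ) → Fin n}

lemma OmegaMat_one_apply (r : Fin ((m + 1) * μ)) :
    OmegaMat n μ m 1 e ℓ r = phiVec ((m + 1) * μ) (e (ℓ r)) := by
  ext c
  simp only [OmegaMat, of_apply, phiVec, Nat.sub_self, zero_mul, zero_add]

lemma isUnit_det_OmegaMat (i : ℕ) (he : ∀ r, e (ℓ r) ≠ 0)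
    (heinj : Function.Injective fun r => e (ℓ r)) : IsUnit (OmegaMat n μ m i e ℓ).det := by
  have hfactor : OmegaMat n μ m i e ℓ =
      diagonal (fun r => e (ℓ r) ^ ((i - 1) * (m * μ) + 1)) * vandermonde fun r => e (ℓ r) := by
    ext r c
    rw [OmegaMat, of_apply, diagonal_mul, vandermonde_apply, ← pow_add, add_right_comm]
  rw [hfactor, det_mul, det_diagonal, isUnit_iff_ne_zero]
  exact mul_ne_zero (prod_ne_zero_iff.2 fun r _ => pow_ne_zero _ (he r))
    (det_vandermonde_ne_zero_iff.2 heinj)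

variable (hμ : 0 < μ) (S : ℕ → Matrix (Fin μ) (Fin μ) F) (hm : 0 < m) (hdvd : m ∣ z)
  (h1z : 1 ≤ z / m)

lemma repairSym_one (x : F) :
    (fun r => repairSym z μ m 1 hμ hm le_rfl h1z hdvd S (e (ℓ r)) x) =
      OmegaMat n μ m 1 e ℓ *ᵥ
        (Nmat μ m hm (subM z μ m 1 hμ hm le_rfl h1z hdvd S) (S (2 * m)) *ᵥ psiSeg m μ 1 x) := by
  ext r
  calc
    _ = xSeg z μ m 1 hμ hm le_rfl h1z hdvd S (e (ℓ r)) ⬝ᵥ psiSeg m μ 1 x := rfl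
    _ = _ := by rw [xSeg_one, ← dotProduct_mulVec, mulVec, OmegaMat_one_apply]

lemma inv_OmegaMat_mulVec_repairSym (he : ∀ r, e (ℓ r) ≠ 0)
    (heinj : Function.Injective fun r => e (ℓ r)) (x : F) :
    (OmegaMat n μ m 1 e ℓ)⁻¹ *ᵥ
        (fun r => repairSym z μ m 1 hμ hm le_rfl h1z hdvd S (e (ℓ r)) x) =
      Nmat μ m hm (subM z μ m 1 hμ hm le_rfl h1z hdvd S) (S (2 * m)) *ᵥ psiSeg m μ 1 x := by
  rw [repairSym_one, mulVec_mulVec, nonsing_inv_mul _ (isUnit_det_OmegaMat 1 he heinj), one_mulVec]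

lemma xSeg_one_apply (x : F) (c : Fin (m * μ)) :
    xSeg z μ m 1 hμ hm le_rfl h1z hdvd S x c =
      (psiSeg m μ 1 x ᵥ* subM z μ m 1 hμ hm le_rfl h1z hdvd S) c +
        if h : (m - 1) * μ ≤ c.val then
          x ^ (m * μ) *
            (phiVec μ x ᵥ* S (2 * m)) ⟨c.val - (m - 1) * μ, nmat_aux2 hm c.isLt h⟩
        else 0 := by
  have hlast : (fun b => phiVec ((m + 1) * μ) x (lastBlockEquiv m μ (.inr b))) =
      x ^ (m * μ) • phiVec μ x :=
    funext fun b => phiVec_lastBlockEquiv_inr x b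
  rw [xSeg_one, vecMul_Nmat, hlast, smul_vecMul, psiSeg_one]
  rfl

theorem repair_decode_step1_general (he : ∀ r, e (ℓ r) ≠ 0)
    (heinj : Function.Injective fun r => e (ℓ r)) (x : F) :
    let Υ : Fin ((m + 1) * μ) → F := fun r =>
      repairSym z μ m 1 hμ hm le_rfl h1z hdvd S (e (ℓ r)) x
    subM z μ m 1 hμ hm le_rfl h1z hdvd S *ᵥ psiSeg m μ 1 x =
        ThetaMat μ m (OmegaMat n μ m 1 e ℓ)⁻¹ *ᵥ Υ ∧
      (S (2 * m) *ᵥ fun a => x ^ ((m - 1) * μ) * phiVec μ x a) =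
        XiMat μ m (OmegaMat n μ m 1 e ℓ)⁻¹ *ᵥ Υ ∧
      ∀ a : Fin (m * μ),
        xSeg z μ m 1 hμ hm le_rfl h1z hdvd S x a =
          (psiSeg m μ 1 x ᵥ* subM z μ m 1 hμ hm le_rfl h1z hdvd S) a +
            if h : (m - 1) * μ ≤ a.val then
              x ^ (m * μ) *
                (phiVec μ x ᵥ* S (2 * m)) ⟨a.val - (m - 1) * μ, nmat_aux2 hm a.isLt h⟩
            else 0 := by
  intro Υ
  have hsolve := inv_OmegaMat_mulVec_repairSym hμ S hm hdvd h1z he heinj x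
  refine ⟨?_, ?_, xSeg_one_apply hμ S hm hdvd h1z x⟩
  · ext a
    rw [ThetaMat_mulVec, hsolve, Nmat_mulVec_inl]
  · obtain ⟨k, rfl⟩ := Nat.exists_eq_add_one.2 hm
    ext b
    simp only [XiMat_mulVec, Υ, hsolve, Nmat_mulVec_inr, psiSeg_one, phiVec_lastBlockEquiv_inr,
      Nat.add_sub_cancel]

end Repair

/-- in the repair of node `f` from `d = (m+1)μ` helpers, writing
`(Ω_H(1))⁻¹ = [Θ; Ξ]` with `Θ` the top `(d-μ) × d` and `Ξ` the bottom `μ × d` submatrix,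
and `Υ_H(1)` for the column vector of first repair symbols, we have
`M₁ (ψ_f(1))ᵀ = Θ Υ_H(1)`, `S_{2m} (e_f^{(m-1)μ} φ_f)ᵀ = Ξ Υ_H(1)`, and consequently
`x_f(1) = ψ_f(1) M₁ + [0, …, 0, e_f^{mμ} φ_f S_{2m}]` (zero padding of length `(m-1)μ`). -/
theorem repair_decode_step1 {F : Type*} [Field F] (μ z m n : ℕ) (hμ : 0 < μ)
    (hz : 0 < z) (hm : 0 < m) (hdvd : m ∣ z) (hn : 0 < n)
    (e : Fin n → F) (he : ∀ j, e j ≠ 0) (heinj : Function.Injective e)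
    (S : ℕ → Matrix (Fin μ) (Fin μ) F) (hS : ∀ t, 1 ≤ t → t ≤ 2 * z → (S t).IsSymm)
    (f : Fin n) (ℓ : Fin ((m + 1) * μ) → Fin n) (hℓ : Function.Injective ℓ)
    (hℓf : ∀ r, ℓ r ≠ f) :
    let h1z : 1 ≤ z / m := (Nat.one_le_div_iff hm).mpr (Nat.le_of_dvd hz hdvd)
    let Υ : Fin ((m + 1) * μ) → F := fun r =>
      repairSym z μ m 1 hμ hm (le_refl 1) h1z hdvd S (e (ℓ r)) (e f)
    (Matrix.mulVec (subM z μ m 1 hμ hm (le_refl 1) h1z hdvd S) (psiSeg m μ 1 (e f))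
        = Matrix.mulVec (ThetaMat μ m (OmegaMat n μ m 1 e ℓ)⁻¹) Υ)
    ∧ (Matrix.mulVec (S (2 * m)) (fun a => e f ^ ((m - 1) * μ) * phiVec μ (e f) a)
        = Matrix.mulVec (XiMat μ m (OmegaMat n μ m 1 e ℓ)⁻¹) Υ)
    ∧ (∀ a : Fin (m * μ),
        xSeg z μ m 1 hμ hm (le_refl 1) h1z hdvd S (e f) a
          = Matrix.vecMul (psiSeg m μ 1 (e f)) (subM z μ m 1 hμ hm (le_refl 1) h1z hdvd S) a
            + if h2 : (m - 1) * μ ≤ a.val then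
                e f ^ (m * μ) *
                  Matrix.vecMul (phiVec μ (e f)) (S (2 * m))
                    ⟨a.val - (m - 1) * μ, nmat_aux2 hm a.isLt h2⟩
              else 0) :=
  repair_decode_step1_general hμ S hm hdvd _ (fun r => he (ℓ r)) (heinj.comp hℓ) (e f)
end

section
/- In the setting of the repair procedure with m ∣ z, d = (m+1)μ, β = z/m, failed node f and helper set H = {ℓ_1, …, ℓ_d}: for every 2 ≤ i ≤ β, the d × 1 column vector Υ_H(i) of repair symbols r_i(ℓ, f), ℓ ∈ H, satisfies Υ_H(i) − W_i · S_{2(i−1)m} · (e_f^{(i−1)mμ} φ_f)^T = Ω_H(i) · N_i · (ψ_f(i))^T, where W_i is the d × μ matrix whose row for helper ℓ is e_ℓ^{(i−1)mμ−μ} φ_ℓ, and N_i is the d × mμ matrix whose top mμ rows form the submatrix M_i of M and whose bottom μ rows are the block row [O, …, O, S_{2im}] consisting of (m−1) μ × μ zero blocks followed by S_{2im}. -/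
open Matrix Finset

/-!
Cut everything into blocks of size `μ`. With `Q(s,t)` the contribution
`y^{sμ} φ_y · B(s,t) · (x^{tμ} φ_x)ᵀ` of one block of `M` to a repair symbol, the `i`-th symbol is
the sum of `Q(s,t)` over all block rows `s` and over the `m` block columns `t` starting at
`(i-1)m` (counted from `0`). As `M` is block tridiagonal, the rows that matter are those of `N_i`
and the one just above them, and the latter meets these columns only in `S_{2(i-1)m}`.
-/

section BlockSums

variable {A : Type*} [AddCommMonoid A]

theorem sum_divNat_modNat {n μ : ℕ} (g : ℕ → Fin μ → A) :
    ∑ r : Fin (n * μ), g r.divNat r.modNat = ∑ s ∈ range n, ∑ k, g s k := by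
  rw [Finset.sum_range, ← Fintype.sum_prod_type' fun (s : Fin n) k => g s k,
    ← finProdFinEquiv.symm.sum_comp]
  rfl

theorem sum_blocks_eq_sum_dotProduct_mulVec {R : Type*} [NonUnitalSemiring R] {n m μ : ℕ}
    (B : ℕ → ℕ → Matrix (Fin μ) (Fin μ) R) (u v : ℕ → Fin μ → R) :
    ∑ c : Fin (m * μ),
        (∑ r : Fin (n * μ), u r.divNat r.modNat * B r.divNat c.divNat r.modNat c.modNat)
          * v c.divNat c.modNat
      = ∑ t ∈ range m, ∑ s ∈ range n, u s ⬝ᵥ B s t *ᵥ v t := by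
  have rows (t : ℕ) (b : Fin μ) :
      ∑ r : Fin (n * μ), u r.divNat r.modNat * B r.divNat t r.modNat b
        = ∑ s ∈ range n, (u s ᵥ* B s t) b :=
    sum_divNat_modNat fun s k => u s k * B s t k b
  simp only [rows]
  rw [sum_divNat_modNat fun t b => (∑ s ∈ range n, (u s ᵥ* B s t) b) * v t b]
  refine Finset.sum_congr rfl fun t _ => ?_
  simp only [Finset.sum_mul, dotProduct_mulVec]
  exact Finset.sum_comm

variable {Q : ℕ → ℕ → A} {p m z : ℕ}

theorem sum_column_of_tridiagonal (hQ : ∀ s t, s + 1 < t ∨ t + 1 < s → Q s t = 0) {t : ℕ}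
    (ht : t < m) (hz : p + 1 + m ≤ z) :
    ∑ s ∈ range (z + 1), Q s (p + 1 + t)
      = Q p (p + 1 + t) + ∑ s ∈ range (m + 1), Q (p + 1 + s) (p + 1 + t) := by
  obtain ⟨w, rfl⟩ := Nat.exists_eq_add_of_le hz
  have above : ∑ s ∈ range p, Q s (p + 1 + t) = 0 :=
    Finset.sum_eq_zero fun s hs => hQ _ _ (by grind)
  have below : ∑ s ∈ range w, Q (p + 1 + (m + 1 + s)) (p + 1 + t) = 0 :=
    Finset.sum_eq_zero fun s _ => hQ _ _ (by omega)
  rw [show p + 1 + m + w + 1 = p + 1 + (m + 1 + w) by ring, Finset.sum_range_add,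
    Finset.sum_range_succ, Finset.sum_range_add _ (m + 1), above, below, zero_add, add_zero]

theorem sum_window_of_tridiagonal (hQ : ∀ s t, s + 1 < t ∨ t + 1 < s → Q s t = 0) (hm : 0 < m)
    (hz : p + 1 + m ≤ z) :
    ∑ t ∈ range m, ∑ s ∈ range (z + 1), Q s (p + 1 + t)
      = Q p (p + 1) + ∑ t ∈ range m, ∑ s ∈ range (m + 1), Q (p + 1 + s) (p + 1 + t) := by
  have corner : ∑ t ∈ range m, Q p (p + 1 + t) = Q p (p + 1) :=
    Finset.sum_eq_single_of_mem 0 (mem_range.2 hm) fun t _ ht => hQ _ _ (by omega)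
  rw [← corner, ← Finset.sum_add_distrib]
  exact Finset.sum_congr rfl fun t ht => sum_column_of_tridiagonal hQ (mem_range.1 ht) hz

end BlockSums

section SegmentIndex

variable {k m μ N : ℕ} (a : Fin (m * μ)) (h : k * (m * μ) + a < N * μ)

theorem divNat_segment : (Fin.divNat ⟨k * (m * μ) + a, h⟩ : ℕ) = k * m + a.divNat := by
  simp only [Fin.coe_divNat]
  rw [← mul_assoc, add_comm, Nat.add_mul_div_right _ _ a.modNat.pos, add_comm]

theorem modNat_segment : Fin.modNat ⟨k * (m * μ) + a, h⟩ = a.modNat := by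
  ext
  simp only [Fin.coe_modNat, ← mul_assoc, Nat.mul_add_mod']

end SegmentIndex

section DataBlock

variable {F : Type*} {μ : ℕ}

/-- The block `B(s+1, t+1)` of the data matrix: block indices are counted from `0` here, while
the family `S` keeps its indexing from `1`. It is defined for all `s` and `t`, so that it does
not depend on `z`. -/
def dataBlock [Zero F] (S : ℕ → Matrix (Fin μ) (Fin μ) F) (s t : ℕ) : Matrix (Fin μ) (Fin μ) F :=
  if s = t then S (2 * t + 1)
  else if s + 1 = t then S (2 * (s + 1))
  else if s = t + 1 then S (2 * (t + 1))
  else 0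

section Zero

variable [Zero F] (S : ℕ → Matrix (Fin μ) (Fin μ) F)

theorem dataBlock_succ_right (s : ℕ) : dataBlock S s (s + 1) = S (2 * (s + 1)) := by
  simp [dataBlock]

theorem dataBlock_succ_left (t : ℕ) : dataBlock S (t + 1) t = S (2 * (t + 1)) := by
  rw [dataBlock, if_neg (by omega), if_neg (by omega), if_pos rfl]

theorem dataBlock_eq_zero {s t : ℕ} (h : s + 1 < t ∨ t + 1 < s) : dataBlock S s t = 0 := by
  rw [dataBlock, if_neg (by omega), if_neg (by omega), if_neg (by omega)]

end Zero

variable [Field F] {z m i : ℕ} (hμ : 0 < μ) (S : ℕ → Matrix (Fin μ) (Fin μ) F)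

theorem dataMatrix_apply (r : Fin ((z + 1) * μ)) (c : Fin (z * μ)) :
    dataMatrix z μ hμ S r c = dataBlock S r.divNat c.divNat r.modNat c.modNat := by
  simp only [dataMatrix, of_apply, Fin.coe_divNat]
  split_ifs with diag super sub
  · rw [dataBlock, if_pos diag]; rfl
  · rw [dataBlock, if_neg diag, if_pos super]; rfl
  · rw [dataBlock, if_neg diag, if_neg super, if_pos sub]; rfl
  · rw [dataBlock, if_neg diag, if_neg super, if_neg sub]; rfl

variable (hm : 0 < m) (hi : 1 ≤ i) (hiz : i ≤ z / m) (hdvd : m ∣ z)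

theorem subM_apply (a b : Fin (m * μ)) :
    subM z μ m i hμ hm hi hiz hdvd S a b
      = dataBlock S ((i - 1) * m + a.divNat) ((i - 1) * m + b.divNat) a.modNat b.modNat := by
  simp only [subM, of_apply, dataMatrix_apply, divNat_segment, modNat_segment]

theorem Nmat_subM_apply (r : Fin ((m + 1) * μ)) (c : Fin (m * μ)) :
    Nmat μ m hm (subM z μ m i hμ hm hi hiz hdvd S) (S (2 * i * m)) r c
      = dataBlock S ((i - 1) * m + r.divNat) ((i - 1) * m + c.divNat) r.modNat c.modNat := by
  obtain ⟨i, rfl⟩ : ∃ j, i = j + 1 := Nat.exists_eq_add_of_le' hi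
  obtain ⟨m, rfl⟩ : ∃ k, m = k + 1 := Nat.exists_eq_add_of_le' hm
  rw [Nmat, of_apply]
  split_ifs with top last
  · exact subM_apply hμ S hm hi hiz hdvd ⟨r, top⟩ c
  · have hr : (r : ℕ) / μ = m + 1 :=
      le_antisymm (Nat.lt_succ_iff.1 r.divNat.isLt)
        ((Nat.le_div_iff_mul_le hμ).2 (not_lt.1 top))
    have hc : (c : ℕ) / μ = m :=
      le_antisymm (Nat.lt_succ_iff.1 c.divNat.isLt) ((Nat.le_div_iff_mul_le hμ).2 last)
    have row : ⟨r - (m + 1) * μ, nmat_aux1 r.isLt top⟩ = r.modNat :=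
      Fin.ext (by rw [Fin.coe_modNat, Nat.mod_eq_sub_div_mul, hr])
    have col : ⟨c - m * μ, nmat_aux2 hm c.isLt last⟩ = c.modNat :=
      Fin.ext (by rw [Fin.coe_modNat, Nat.mod_eq_sub_div_mul, hc])
    have index : 2 * (i + 1) * (m + 1) = 2 * (i * (m + 1) + m + 1) := by ring
    simp only [Nat.add_sub_cancel, row, col, index, Fin.coe_divNat, hr, hc, ← add_assoc,
      dataBlock_succ_left]
  · have hr : m + 1 ≤ (r : ℕ) / μ := (Nat.le_div_iff_mul_le hμ).2 (not_lt.1 top)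
    have hc : (c : ℕ) / μ < m := (Nat.div_lt_iff_lt_mul hμ).2 (not_le.1 last)
    rw [dataBlock_eq_zero S (by simp only [Fin.coe_divNat]; omega), Matrix.zero_apply]

end DataBlock

section EvalBlock

variable {F : Type*} [Field F] {μ z m n i : ℕ}

/-- The length-`μ` block `e^{tμ} φ` of the coefficient vector `ψ` of the node with evaluation point
`e`, with blocks counted from `0`. -/
def evalBlock (μ t : ℕ) (e : F) : Fin μ → F := e ^ (t * μ) • phiVec μ e

theorem pow_eq_evalBlock {N : ℕ} (k : ℕ) (e : F) (a : Fin (N * μ)) :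
    e ^ (k * μ + a + 1) = evalBlock μ (k + a.divNat) e a.modNat := by
  simp only [evalBlock, phiVec, Pi.smul_apply, smul_eq_mul, ← pow_add, Fin.coe_divNat,
    Fin.coe_modNat, ← add_assoc, add_mul, add_assoc _ (_ / μ * μ), Nat.div_add_mod']

theorem psiVec_apply (e : F) (r : Fin ((z + 1) * μ)) :
    psiVec z μ e r = evalBlock μ r.divNat e r.modNat := by
  simpa only [psiVec, zero_mul, zero_add] using pow_eq_evalBlock 0 e r

theorem psiSeg_apply (e : F) (a : Fin (m * μ)) :
    psiSeg m μ i e a = evalBlock μ ((i - 1) * m + a.divNat) e a.modNat := by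
  rw [psiSeg, ← mul_assoc, pow_eq_evalBlock]

theorem OmegaMat_apply (e : Fin n → F) (ℓ : Fin ((m + 1) * μ) → Fin n)
    (r c : Fin ((m + 1) * μ)) :
    OmegaMat n μ m i e ℓ r c = evalBlock μ ((i - 1) * m + c.divNat) (e (ℓ r)) c.modNat := by
  rw [OmegaMat, of_apply, ← mul_assoc, pow_eq_evalBlock]

/-- The term `Q(s, t) = (y^{sμ} φ_y) · B(s, t) · (x^{tμ} φ_x)ᵀ` by which the block in block row `s`
and block column `t` (counted from `0`) enters the repair symbol sent by the node with evaluation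
point `y` for the one with evaluation point `x`. -/
def blockForm (B : ℕ → ℕ → Matrix (Fin μ) (Fin μ) F) (y x : F) (s t : ℕ) : F :=
  evalBlock μ s y ⬝ᵥ B s t *ᵥ evalBlock μ t x

theorem blockForm_eq_zero {B : ℕ → ℕ → Matrix (Fin μ) (Fin μ) F} {s t : ℕ} (h : B s t = 0)
    (y x : F) : blockForm B y x s t = 0 := by
  rw [blockForm, h, zero_mulVec, dotProduct_zero]

end EvalBlock

section Repair

variable {F : Type*} [Field F] {μ z m n i : ℕ} (hμ : 0 < μ) (hm : 0 < m) (hi : 1 ≤ i)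
  (hiz : i ≤ z / m) (hdvd : m ∣ z) (S : ℕ → Matrix (Fin μ) (Fin μ) F)

theorem xSeg_apply (e : F) (a : Fin (m * μ)) :
    xSeg z μ m i hμ hm hi hiz hdvd S e a
      = ∑ r : Fin ((z + 1) * μ), evalBlock μ r.divNat e r.modNat *
          dataBlock S r.divNat ((i - 1) * m + a.divNat) r.modNat a.modNat := by
  simp only [xSeg, stored, vecMul, dotProduct, psiVec_apply, dataMatrix_apply,
    divNat_segment, modNat_segment]

theorem repairSym_eq_sum_blockForm (y x : F) :
    repairSym z μ m i hμ hm hi hiz hdvd S y x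
      = ∑ t ∈ range m, ∑ s ∈ range (z + 1),
          blockForm (dataBlock S) y x s ((i - 1) * m + t) := by
  simp only [repairSym, xSeg_apply, psiSeg_apply]
  exact sum_blocks_eq_sum_dotProduct_mulVec (fun s t => dataBlock S s ((i - 1) * m + t))
    (fun s => evalBlock μ s y) (fun t => evalBlock μ ((i - 1) * m + t) x)

theorem OmegaMat_mul_Nmat_mulVec_psiSeg (e : Fin n → F) (ℓ : Fin ((m + 1) * μ) → Fin n) (x : F)
    (r : Fin ((m + 1) * μ)) :
    ((OmegaMat n μ m i e ℓ *
        Nmat μ m hm (subM z μ m i hμ hm hi hiz hdvd S) (S (2 * i * m))) *ᵥ psiSeg m μ i x) r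
      = ∑ t ∈ range m, ∑ s ∈ range (m + 1),
          blockForm (dataBlock S) (e (ℓ r)) x ((i - 1) * m + s) ((i - 1) * m + t) := by
  simp only [mulVec, dotProduct, mul_apply, OmegaMat_apply, psiSeg_apply, Nmat_subM_apply]
  exact sum_blocks_eq_sum_dotProduct_mulVec
    (fun s t => dataBlock S ((i - 1) * m + s) ((i - 1) * m + t))
    (fun s => evalBlock μ ((i - 1) * m + s) (e (ℓ r)))
    (fun t => evalBlock μ ((i - 1) * m + t) x)

theorem mulVec_phiVec_eq_blockForm {ι : Type*} {p : ℕ} (hp : (i - 1) * m = p + 1) (e : ι → F)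
    (x : F) :
    (of fun (r : ι) (c : Fin μ) => e r ^ ((i - 1) * (m * μ) - μ) * phiVec μ (e r) c) *ᵥ
        (S (2 * (i - 1) * m) *ᵥ fun a => x ^ ((i - 1) * (m * μ)) * phiVec μ x a)
      = fun r => blockForm (dataBlock S) (e r) x p (p + 1) := by
  have exponent : (p + 1) * μ - μ = p * μ := by rw [Nat.succ_mul, Nat.add_sub_cancel]
  rw [mul_assoc 2, ← mul_assoc _ m, hp, exponent, ← dataBlock_succ_right S p]
  rfl

end Repair

theorem repair_vector_eq_stepi_general {F : Type*} [Field F] {μ z m n : ℕ} (hμ : 0 < μ)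
    (hm : 0 < m) (hdvd : m ∣ z) (S : ℕ → Matrix (Fin μ) (Fin μ) F)
    (e : Fin n → F) (ℓ : Fin ((m + 1) * μ) → Fin n) (x : F) {i : ℕ} (hi : 2 ≤ i)
    (hiz : i ≤ z / m) :
    (fun r : Fin ((m + 1) * μ) =>
        repairSym z μ m i hμ hm (by omega) hiz hdvd S (e (ℓ r)) x)
      - Matrix.mulVec
          (Matrix.of fun (r : Fin ((m + 1) * μ)) (c : Fin μ) =>
            e (ℓ r) ^ ((i - 1) * (m * μ) - μ) * phiVec μ (e (ℓ r)) c)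
          (Matrix.mulVec (S (2 * (i - 1) * m))
            (fun a => x ^ ((i - 1) * (m * μ)) * phiVec μ x a))
      = Matrix.mulVec
          (OmegaMat n μ m i e ℓ *
            Nmat μ m hm (subM z μ m i hμ hm (by omega) hiz hdvd S) (S (2 * i * m)))
          (psiSeg m μ i x) := by
  obtain ⟨p, hp⟩ : ∃ p, (i - 1) * m = p + 1 :=
    Nat.exists_eq_add_of_le' (Nat.mul_pos (by omega) hm)
  have hz : p + 1 + m ≤ z := by
    rw [← hp, ← Nat.succ_mul, Nat.succ_eq_add_one, Nat.sub_add_cancel (by omega)]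
    exact (Nat.le_div_iff_mul_le hm).1 hiz
  have tridiagonal (y : F) (s t : ℕ) (h : s + 1 < t ∨ t + 1 < s) :
      blockForm (dataBlock S) y x s t = 0 :=
    blockForm_eq_zero (dataBlock_eq_zero S h) y x
  ext r
  rw [Pi.sub_apply, sub_eq_iff_eq_add', mulVec_phiVec_eq_blockForm S hp fun r => e (ℓ r),
    OmegaMat_mul_Nmat_mulVec_psiSeg, repairSym_eq_sum_blockForm, hp]
  exact sum_window_of_tridiagonal (tridiagonal (e (ℓ r))) hm hz

/-- for every `2 ≤ i ≤ β = z/m`, the column vector `Υ_H(i)` of `i`-th repair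
symbols satisfies
`Υ_H(i) - W_i ⬝ S_{2(i-1)m} ⬝ (e_f^{(i-1)mμ} φ_f)ᵀ = Ω_H(i) ⬝ N_i ⬝ (ψ_f(i))ᵀ`,
where the row of `W_i` for helper `ℓ r` is `e_{ℓ r}^{(i-1)mμ-μ} φ_{ℓ r}` and `N_i` is the
`d × mμ` matrix with top rows `M_i` and bottom block row `[O, …, O, S_{2im}]`. -/
theorem repair_vector_eq_stepi {F : Type*} [Field F] (μ z m n : ℕ) (hμ : 0 < μ)
    (hz : 0 < z) (hm : 0 < m) (hdvd : m ∣ z) (hn : 0 < n)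
    (e : Fin n → F) (he : ∀ j, e j ≠ 0) (heinj : Function.Injective e)
    (S : ℕ → Matrix (Fin μ) (Fin μ) F) (hS : ∀ t, 1 ≤ t → t ≤ 2 * z → (S t).IsSymm)
    (f : Fin n) (ℓ : Fin ((m + 1) * μ) → Fin n) (hℓ : Function.Injective ℓ) :
    ∀ i, ∀ hi2 : 2 ≤ i, ∀ hiz : i ≤ z / m,
    (fun r : Fin ((m + 1) * μ) =>
        repairSym z μ m i hμ hm (by omega) hiz hdvd S (e (ℓ r)) (e f))
      - Matrix.mulVec
          (Matrix.of fun (r : Fin ((m + 1) * μ)) (c : Fin μ) =>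
            e (ℓ r) ^ ((i - 1) * (m * μ) - μ) * phiVec μ (e (ℓ r)) c)
          (Matrix.mulVec (S (2 * (i - 1) * m))
            (fun a => e f ^ ((i - 1) * (m * μ)) * phiVec μ (e f) a))
      = Matrix.mulVec
          (OmegaMat n μ m i e ℓ *
            Nmat μ m hm (subM z μ m i hμ hm (by omega) hiz hdvd S) (S (2 * i * m)))
          (psiSeg m μ i (e f)) := by
  intro i hi2 hiz
  exact repair_vector_eq_stepi_general hμ hm hdvd S e ℓ (e f) hi2 hiz
end

section
/- Exact bandwidth-adaptive repair: Let F be a field, μ ≥ 1, z ≥ 1, n ≥ 1, with pairwise distinct nonzero elements e_1, …, e_n of F. Let m ≥ 1 divide z, set d = (m+1)μ and β = z/m, let f ∈ {1, …, n} be a failed node index, and let H ⊆ {1, …, n} \ {f} be any set of d helper indices. Suppose (S_1, …, S_{2z}) and (S′_1, …, S′_{2z}) are two families of symmetric μ × μ matrices over F, with data matrices M and M′, such that all repair symbols agree: r_i(h, f) = r′_i(h, f) for every h ∈ H and every 1 ≤ i ≤ β (where r′ denotes the repair symbols computed from M′). Then ψ_f M = ψ_f M′. In other words, the content x_f of the failed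 node is uniquely determined by the β = α/(d−μ) repair symbols received from each of the d helpers. -/
open Matrix Finset

/-!
By linearity it suffices to treat one family `S` whose repair symbols all vanish. Let `u k` be the
product of the `k`-th group of `m` block columns of `M` with the corresponding segment of `ψ_f`, so
that the repair symbols are the values `ψ_h · u k`. Since `M` is block tridiagonal, `u k` is
supported on the `m + 1` block rows `km, …, km + m` and on block row `km - 1`. On the latter it is,
up to the factor `e_f ^ μ`, the bottom block of `u (k - 1)`, because the blocks `(t, t + 1)` and
`(t + 1, t)` of `M` coincide. If `u (k - 1)` vanishes, only `d = (m + 1)μ` unknowns remain, and the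
`d` helpers determine them through an invertible Vandermonde system. Hence every `u k` vanishes. By
symmetry of the blocks, `ψ_f M` is the sum of the `u k`, cut off at row `zμ`, plus a contribution of
`S (2z)` that is a multiple of the bottom block of the last `u k`; so it vanishes as well.
-/

section Vandermonde

variable {R : Type*} [CommRing R] [IsDomain R]

theorem eq_zero_of_forall_sum_Ico_pow_mul_eq_zero {d a : ℕ} {y : Fin d → R}
    (hy : Function.Injective y) (hy0 : ∀ s, y s ≠ 0) {v : ℕ → R}
    (h : ∀ s, ∑ r ∈ Ico a (a + d), y s ^ r * v r = 0) {r : ℕ} (hr : r ∈ Ico a (a + d)) :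
    v r = 0 := by
  have hshift : (fun i : Fin d => v (a + i)) = 0 := by
    refine eq_zero_of_forall_index_sum_pow_mul_eq_zero hy fun s => ?_
    have hs : y s ^ a * ∑ i : Fin d, y s ^ (i : ℕ) * v (a + i) = 0 := by
      simpa only [sum_Ico_eq_sum_range, Nat.add_sub_cancel_left, sum_range, pow_add, mul_assoc,
        ← mul_sum] using h s
    exact (mul_eq_zero.1 hs).resolve_left (pow_ne_zero _ (hy0 s))
  obtain ⟨har, hrd⟩ := mem_Ico.1 hr
  simpa only [Nat.add_sub_cancel' har, Pi.zero_apply] using congrFun hshift ⟨r - a, by omega⟩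

end Vandermonde

/-- An infinite array, cut into `μ × μ` blocks, that is block tridiagonal and whose blocks
`(t, t + 1)` and `(t + 1, t)` are equal (as matrices, not transposes of one another). -/
structure IsBalancedBlockTridiagonal {R : Type*} [Zero R] (μ : ℕ) (A : ℕ → ℕ → R) : Prop where
  eq_zero_of_above : ∀ {r c}, r / μ + 1 < c / μ → A r c = 0
  eq_zero_of_below : ∀ {r c}, c / μ + 1 < r / μ → A r c = 0
  shift : ∀ {r c}, r / μ = c / μ → A r (c + μ) = A (r + μ) c

/-- The product of row `r` of `A`, restricted to the block columns `j, …, q - 1`, with the same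
segment of the coefficient vector `(x, x², …)`. -/
def segEval {R : Type*} [Semiring R] (μ : ℕ) (A : ℕ → ℕ → R) (x : R) (j q r : ℕ) : R :=
  ∑ c ∈ Ico (j * μ) (q * μ), A r c * x ^ (c + 1)

section SegEval

variable {R : Type*} [Semiring R]

theorem segEval_add_segEval (μ : ℕ) (A : ℕ → ℕ → R) (x : R) {j q b : ℕ} (hjq : j ≤ q)
    (hqb : q ≤ b) (r : ℕ) :
    segEval μ A x j q r + segEval μ A x q b r = segEval μ A x j b r :=
  sum_Ico_consecutive _ (Nat.mul_le_mul_right μ hjq) (Nat.mul_le_mul_right μ hqb)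

theorem segEval_add_right (μ : ℕ) (A : ℕ → ℕ → R) (x : R) (j m r : ℕ) :
    segEval μ A x j (j + m) r =
      ∑ a : Fin (m * μ), A r (j * μ + a) * x ^ (j * μ + a + 1) := by
  rw [segEval, sum_Ico_eq_sum_range, add_mul, Nat.add_sub_cancel_left, sum_range]

end SegEval

namespace IsBalancedBlockTridiagonal

section Semiring

variable {R : Type*} [Semiring R] {μ : ℕ} {A : ℕ → ℕ → R}

theorem segEval_eq_zero_of_row_lt (hA : IsBalancedBlockTridiagonal μ A) (hμ : 0 < μ) (x : R)
    {j q r : ℕ} (hr : r / μ + 1 < j) : segEval μ A x j q r = 0 := by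
  refine sum_eq_zero fun c hc => ?_
  have hjc : j ≤ c / μ := (Nat.le_div_iff_mul_le hμ).2 (mem_Ico.1 hc).1
  rw [hA.eq_zero_of_above (hr.trans_le hjc), zero_mul]

theorem segEval_eq_zero_of_lt_row (hA : IsBalancedBlockTridiagonal μ A) (hμ : 0 < μ) (x : R)
    {j q r : ℕ} (hr : q < r / μ) : segEval μ A x j q r = 0 := by
  refine sum_eq_zero fun c hc => ?_
  have hcq : c / μ < q := (Nat.div_lt_iff_lt_mul hμ).2 (mem_Ico.1 hc).2
  rw [hA.eq_zero_of_below (by omega), zero_mul]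

end Semiring

section CommSemiring

variable {R : Type*} [CommSemiring R] {μ : ℕ} {A : ℕ → ℕ → R}

theorem segEval_succ_block (hA : IsBalancedBlockTridiagonal μ A) (hμ : 0 < μ) (x : R) (r : ℕ) :
    segEval μ A x (r / μ + 1) (r / μ + 2) r =
      x ^ μ * segEval μ A x (r / μ) (r / μ + 1) (r + μ) := by
  have hcols : segEval μ A x (r / μ + 1) (r / μ + 2) r =
      ∑ c ∈ Ico (r / μ * μ) ((r / μ + 1) * μ), A r (c + μ) * x ^ (c + μ + 1) := by
    rw [sum_Ico_add' fun c => A r c * x ^ (c + 1), ← Nat.succ_mul, ← Nat.succ_mul, segEval]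
  rw [hcols, segEval, mul_sum]
  refine sum_congr rfl fun c hc => ?_
  have hrc : r / μ = c / μ := by
    obtain ⟨hle, hlt⟩ := mem_Ico.1 hc
    exact le_antisymm ((Nat.le_div_iff_mul_le hμ).2 hle)
      (Nat.lt_succ_iff.1 ((Nat.div_lt_iff_lt_mul hμ).2 hlt))
  rw [hA.shift hrc]
  ring

theorem segEval_eq_pow_mul_segEval (hA : IsBalancedBlockTridiagonal μ A) (hμ : 0 < μ) (x : R)
    {j b r : ℕ} (hj : j ≤ r / μ) (hb : r / μ + 2 ≤ b) :
    segEval μ A x (r / μ + 1) b r = x ^ μ * segEval μ A x j (r / μ + 1) (r + μ) := by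
  have hright : segEval μ A x (r / μ + 2) b r = 0 :=
    hA.segEval_eq_zero_of_row_lt hμ x (Nat.lt_succ_self _)
  have hleft : segEval μ A x j (r / μ) (r + μ) = 0 :=
    hA.segEval_eq_zero_of_lt_row hμ x (by rw [Nat.add_div_right r hμ]; exact Nat.lt_succ_self _)
  rw [← segEval_add_segEval μ A x (Nat.le_succ (r / μ + 1)) hb, hright, add_zero,
    ← segEval_add_segEval μ A x hj (Nat.le_succ (r / μ)), hleft, zero_add,
    hA.segEval_succ_block hμ x]

theorem segEval_eq_zero_of_prefix (hA : IsBalancedBlockTridiagonal μ A) (hμ : 0 < μ) {x : R}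
    {q b : ℕ} (hqb : q < b) (hprefix : ∀ r, segEval μ A x 0 q r = 0) {r : ℕ} (hr : r < q * μ) :
    segEval μ A x q b r = 0 := by
  obtain hlt | rfl : r / μ + 1 < q ∨ r / μ + 1 = q :=
    lt_or_eq_of_le ((Nat.div_lt_iff_lt_mul hμ).2 hr)
  · exact hA.segEval_eq_zero_of_row_lt hμ x hlt
  · rw [hA.segEval_eq_pow_mul_segEval hμ x (Nat.zero_le _) hqb, hprefix, mul_zero]

end CommSemiring

section Domain

variable {R : Type*} [CommRing R] [IsDomain R] {μ m : ℕ} {A : ℕ → ℕ → R}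
  {y : Fin ((m + 1) * μ) → R} {x : R}

theorem segEval_eq_zero_of_forall_sum (hA : IsBalancedBlockTridiagonal μ A) (hμ : 0 < μ)
    (hy : Function.Injective y) (hy0 : ∀ s, y s ≠ 0) {j N : ℕ} (hN : j + m < N)
    (hlow : ∀ r < j * μ, segEval μ A x j (j + m) r = 0)
    (hsum : ∀ s, ∑ r ∈ range (N * μ), y s ^ (r + 1) * segEval μ A x j (j + m) r = 0) (r : ℕ) :
    segEval μ A x j (j + m) r = 0 := by
  have hend : j * μ + (m + 1) * μ = (j + m + 1) * μ := by ring
  have hsupp : ∀ r ∉ Ico (j * μ) (j * μ + (m + 1) * μ), segEval μ A x j (j + m) r = 0 := by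
    intro r hr
    rcases lt_or_ge r (j * μ) with hlt | hge
    · exact hlow r hlt
    · have hle : (j + m + 1) * μ ≤ r := by
        rw [← hend]
        exact not_lt.1 fun hlt => hr (mem_Ico.2 ⟨hge, hlt⟩)
      exact hA.segEval_eq_zero_of_lt_row hμ x ((Nat.le_div_iff_mul_le hμ).2 hle)
  by_cases hr : r ∈ Ico (j * μ) (j * μ + (m + 1) * μ)
  · refine eq_zero_of_forall_sum_Ico_pow_mul_eq_zero hy hy0 (fun s => ?_) hr
    have hsub : Ico (j * μ) (j * μ + (m + 1) * μ) ⊆ range (N * μ) := by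
      rw [hend, range_eq_Ico]
      exact Ico_subset_Ico (Nat.zero_le _) (Nat.mul_le_mul_right μ hN)
    have hs := hsum s
    rw [← sum_subset hsub fun r _ hr => by rw [hsupp r hr, mul_zero]] at hs
    simp only [pow_succ', mul_assoc, ← mul_sum] at hs
    exact (mul_eq_zero.1 hs).resolve_left (hy0 s)
  · exact hsupp r hr

theorem segEval_prefix_eq_zero (hA : IsBalancedBlockTridiagonal μ A) (hμ : 0 < μ) (hm : 0 < m)
    (hy : Function.Injective y) (hy0 : ∀ s, y s ≠ 0) {β : ℕ}
    (hsum : ∀ k < β, ∀ s, ∑ r ∈ range ((m * β + 1) * μ),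
      y s ^ (r + 1) * segEval μ A x (k * m) (k * m + m) r = 0) :
    ∀ k ≤ β, ∀ r, segEval μ A x 0 (k * m) r = 0 := by
  intro k
  induction k with
  | zero => simp [segEval]
  | succ k ih =>
    intro hk r
    have hprefix := ih (Nat.le_of_succ_le hk)
    have hN : k * m + m < m * β + 1 := by
      rw [← Nat.succ_mul, mul_comm m]
      exact Nat.lt_succ_of_le (Nat.mul_le_mul_right m hk)
    have hseg : segEval μ A x (k * m) (k * m + m) r = 0 :=
      hA.segEval_eq_zero_of_forall_sum hμ hy hy0 hN
        (fun _ => hA.segEval_eq_zero_of_prefix hμ (Nat.lt_add_of_pos_right hm) hprefix)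
        (hsum k hk) r
    rw [Nat.succ_mul, ← segEval_add_segEval μ A x (Nat.zero_le (k * m)) (Nat.le_add_right _ m),
      hprefix, hseg, add_zero]

end Domain

end IsBalancedBlockTridiagonal

/-- The entries of `dataMatrix`, extended by the same block pattern to all pairs of natural
numbers, so that row and column indices can be shifted and swapped without bounds. -/
def dataEntry {R : Type*} [Zero R] (μ : ℕ) (hμ : 0 < μ) (S : ℕ → Matrix (Fin μ) (Fin μ) R)
    (r c : ℕ) : R :=
  if r / μ = c / μ then
    S (2 * (c / μ) + 1) ⟨r % μ, Nat.mod_lt _ hμ⟩ ⟨c % μ, Nat.mod_lt _ hμ⟩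
  else if r / μ + 1 = c / μ then
    S (2 * (r / μ) + 2) ⟨r % μ, Nat.mod_lt _ hμ⟩ ⟨c % μ, Nat.mod_lt _ hμ⟩
  else if r / μ = c / μ + 1 then
    S (2 * (c / μ) + 2) ⟨r % μ, Nat.mod_lt _ hμ⟩ ⟨c % μ, Nat.mod_lt _ hμ⟩
  else 0

section DataEntry

variable {R : Type*} [Zero R] {μ : ℕ}

theorem isBalancedBlockTridiagonal_dataEntry (hμ : 0 < μ) (S : ℕ → Matrix (Fin μ) (Fin μ) R) :
    IsBalancedBlockTridiagonal μ (dataEntry μ hμ S) where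
  eq_zero_of_above {r c} h := by
    rw [dataEntry, if_neg (by omega), if_neg (by omega), if_neg (by omega)]
  eq_zero_of_below {r c} h := by
    rw [dataEntry, if_neg (by omega), if_neg (by omega), if_neg (by omega)]
  shift {r c} h := by
    simp only [dataEntry, Nat.add_div_right _ hμ, Nat.add_mod_right, h]
    simp only [if_true, if_neg (Nat.ne_of_lt (Nat.lt_succ_self _)),
      if_neg (Nat.succ_ne_self _), if_neg (show c / μ + 1 + 1 ≠ c / μ by omega)]

theorem dataEntry_comm (hμ : 0 < μ) {S : ℕ → Matrix (Fin μ) (Fin μ) R} {z : ℕ}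
    (hS : ∀ t, 1 ≤ t → t ≤ 2 * z → (S t).IsSymm) (r : ℕ) {c : ℕ} (hc : c < z * μ) :
    dataEntry μ hμ S r c = dataEntry μ hμ S c r := by
  have hcz : c / μ < z := (Nat.div_lt_iff_lt_mul hμ).2 hc
  rcases eq_or_ne (r / μ) (c / μ) with hdiag | hdiag
  · simp only [dataEntry, hdiag, if_true]
    exact (hS _ (by omega) (by omega)).apply _ _
  by_cases habove : r / μ + 1 = c / μ
  · simp only [dataEntry, if_neg hdiag, if_neg hdiag.symm, if_pos habove, if_pos habove.symm]
    rw [if_neg (by omega)]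
    exact (hS _ (by omega) (by omega)).apply _ _
  by_cases hbelow : r / μ = c / μ + 1
  · simp only [dataEntry, if_neg hdiag, if_neg hdiag.symm, if_neg habove, if_pos hbelow,
      if_pos hbelow.symm]
    exact (hS _ (by omega) (by omega)).apply _ _
  · simp only [dataEntry, if_neg hdiag, if_neg hdiag.symm, if_neg habove, if_neg hbelow,
      if_neg (Ne.symm habove), if_neg (Ne.symm hbelow)]

end DataEntry

section Repair

variable {F : Type*} [Field F] {μ z m : ℕ}

theorem dataMatrix_sub (hμ : 0 < μ) (S S' : ℕ → Matrix (Fin μ) (Fin μ) F) :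
    dataMatrix z μ hμ (S - S') = dataMatrix z μ hμ S - dataMatrix z μ hμ S' := by
  ext r c
  simp only [dataMatrix, of_apply, Matrix.sub_apply, Pi.sub_apply]
  split_ifs <;> simp only [sub_zero]

theorem stored_sub (hμ : 0 < μ) (S S' : ℕ → Matrix (Fin μ) (Fin μ) F) (x : F) :
    stored z μ hμ (S - S') x = stored z μ hμ S x - stored z μ hμ S' x := by
  rw [stored, dataMatrix_sub, vecMul_sub, stored, stored]

theorem repairSym_sub {i : ℕ} (hμ : 0 < μ) (hm : 0 < m) (hi1 : 1 ≤ i) (hiz : i ≤ z / m)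
    (hdvd : m ∣ z) (S S' : ℕ → Matrix (Fin μ) (Fin μ) F) (y x : F) :
    repairSym z μ m i hμ hm hi1 hiz hdvd (S - S') y x =
      repairSym z μ m i hμ hm hi1 hiz hdvd S y x - repairSym z μ m i hμ hm hi1 hiz hdvd S' y x := by
  simp only [repairSym, xSeg, stored_sub, Pi.sub_apply, sub_mul, sum_sub_distrib]

theorem stored_apply (hμ : 0 < μ) (S : ℕ → Matrix (Fin μ) (Fin μ) F) (x : F) (c : Fin (z * μ)) :
    stored z μ hμ S x c =
      ∑ r ∈ range ((z + 1) * μ), x ^ (r + 1) * dataEntry μ hμ S r c :=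
  (sum_range fun r => x ^ (r + 1) * dataEntry μ hμ S r c).symm

theorem stored_apply_eq_segEval (hμ : 0 < μ) {S : ℕ → Matrix (Fin μ) (Fin μ) F}
    (hS : ∀ t, 1 ≤ t → t ≤ 2 * z → (S t).IsSymm) (x : F) (c : Fin (z * μ)) :
    stored z μ hμ S x c = segEval μ (dataEntry μ hμ S) x 0 (z + 1) c := by
  rw [stored_apply, segEval, zero_mul, ← range_eq_Ico]
  exact sum_congr rfl fun r _ => by rw [dataEntry_comm hμ hS r c.isLt, mul_comm]

theorem repairSym_succ_eq_sum_segEval {k : ℕ} (hμ : 0 < μ) (hm : 0 < m) (hk : k + 1 ≤ z / m)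
    (hdvd : m ∣ z) (S : ℕ → Matrix (Fin μ) (Fin μ) F) (y x : F) :
    repairSym z μ m (k + 1) hμ hm (Nat.succ_pos k) hk hdvd S y x =
      ∑ r ∈ range ((z + 1) * μ),
        y ^ (r + 1) * segEval μ (dataEntry μ hμ S) x (k * m) (k * m + m) r := by
  simp only [repairSym, xSeg, psiSeg, stored_apply, segEval_add_right, Nat.add_sub_cancel,
    ← mul_assoc k, sum_mul, mul_sum]
  rw [sum_comm]
  simp only [mul_assoc]

theorem stored_eq_zero_of_repairSym_eq_zero (hμ : 0 < μ) (hm : 0 < m) (hdvd : m ∣ z)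
    {y : Fin ((m + 1) * μ) → F} (hy : Function.Injective y) (hy0 : ∀ s, y s ≠ 0) {x : F}
    {S : ℕ → Matrix (Fin μ) (Fin μ) F} (hS : ∀ t, 1 ≤ t → t ≤ 2 * z → (S t).IsSymm)
    (hrep : ∀ i, ∀ hi1 : 1 ≤ i, ∀ hiz : i ≤ z / m, ∀ s,
      repairSym z μ m i hμ hm hi1 hiz hdvd S (y s) x = 0) :
    stored z μ hμ S x = 0 := by
  have hA := isBalancedBlockTridiagonal_dataEntry hμ S
  have hz : m * (z / m) = z := Nat.mul_div_cancel' hdvd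
  have hprefix : ∀ r, segEval μ (dataEntry μ hμ S) x 0 z r = 0 := by
    have h := hA.segEval_prefix_eq_zero hμ hm hy hy0 (x := x) (β := z / m) fun k hk s => by
      rw [hz, ← repairSym_succ_eq_sum_segEval hμ hm hk hdvd, hrep]
    simpa only [Nat.div_mul_cancel hdvd] using h (z / m) le_rfl
  funext c
  rw [stored_apply_eq_segEval hμ hS, ← segEval_add_segEval _ _ _ (Nat.zero_le z) (Nat.le_succ z),
    hprefix, hA.segEval_eq_zero_of_prefix hμ (Nat.lt_succ_self z) hprefix c.isLt, add_zero,
    Pi.zero_apply]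

theorem exact_repair_unique_general (hμ : 0 < μ) (hm : 0 < m) (hdvd : m ∣ z)
    {y : Fin ((m + 1) * μ) → F} (hy : Function.Injective y) (hy0 : ∀ s, y s ≠ 0) {x : F}
    {S S' : ℕ → Matrix (Fin μ) (Fin μ) F}
    (hS : ∀ t, 1 ≤ t → t ≤ 2 * z → (S t - S' t).IsSymm)
    (hrep : ∀ i, ∀ hi1 : 1 ≤ i, ∀ hiz : i ≤ z / m, ∀ s,
      repairSym z μ m i hμ hm hi1 hiz hdvd S (y s) x =
        repairSym z μ m i hμ hm hi1 hiz hdvd S' (y s) x) :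
    stored z μ hμ S x = stored z μ hμ S' x := by
  rw [← sub_eq_zero, ← stored_sub]
  refine stored_eq_zero_of_repairSym_eq_zero hμ hm hdvd hy hy0 hS fun i hi1 hiz s => ?_
  rw [repairSym_sub, hrep, sub_self]

end Repair

/-- exact bandwidth-adaptive repair, Theorem 3: if two families of
symmetric source matrices produce identical repair symbols `r_i(h, f)`, for all helpers
`h` in a set `H` of `d = (m+1)μ` nodes not containing `f` and all `1 ≤ i ≤ β = z/m`,
then they produce the same content on node `f`: the content `x_f` of the failed node is
uniquely determined by the `β` repair symbols received from each of the `d` helpers. -/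
theorem exact_repair_unique {F : Type*} [Field F] (μ z m n : ℕ) (hμ : 0 < μ)
    (hz : 0 < z) (hm : 0 < m) (hdvd : m ∣ z) (hn : 0 < n)
    (e : Fin n → F) (he : ∀ j, e j ≠ 0) (heinj : Function.Injective e)
    (f : Fin n) (ℓ : Fin ((m + 1) * μ) → Fin n) (hℓ : Function.Injective ℓ)
    (hℓf : ∀ r, ℓ r ≠ f)
    (S S' : ℕ → Matrix (Fin μ) (Fin μ) F)
    (hS : ∀ t, 1 ≤ t → t ≤ 2 * z → (S t).IsSymm)
    (hS' : ∀ t, 1 ≤ t → t ≤ 2 * z → (S' t).IsSymm)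
    (hrep : ∀ i, ∀ hi1 : 1 ≤ i, ∀ hiz : i ≤ z / m, ∀ r : Fin ((m + 1) * μ),
      repairSym z μ m i hμ hm hi1 hiz hdvd S (e (ℓ r)) (e f)
        = repairSym z μ m i hμ hm hi1 hiz hdvd S' (e (ℓ r)) (e f)) :
    stored z μ hμ S (e f) = stored z μ hμ S' (e f) :=
  exact_repair_unique_general hμ hm hdvd (heinj.comp hℓ) (fun r => he (ℓ r))
    (fun t h1 h2 => (hS t h1 h2).sub (hS' t h1 h2)) hrep
end
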